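/- arXiv:0806.0855 — 10 statements merged into one kernel-verified Lean document; each statement's English description precedes it below -/
import Mathlib

section
/- In the witness iteration, every expectation value w_n = trace(R · B_n B_n†) is a real number, and the sequence (w_n) is monotonically decreasing: w_{n+1} ≤ w_n for all n ≥ 1, regardless of the starting operator B₁ and of the choice of unitaries. -/
open Matrix ComplexOrder

/-- **Monotonicity of the expectation values of the witness iteration.**
For a Hermitian `R` with `trace R = 1` and the iteration
`B (n+1) = B n * U n - trace(R * B n * U n) • 𝟙` (each `U n` unitary),
every expectation value `w n = trace(R * B n * B nᴴ)` is real and the sequence is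
monotonically decreasing: `w (n+1) ≤ w n` for all `n ≥ 1`. -/
theorem witness_iteration_expectation_real_and_decreasing
    {d : ℕ} (hd : 1 ≤ d)
    (R : Matrix (Fin d) (Fin d) ℂ) (hR : R.IsHermitian) (htr : R.trace = 1)
    (B U : ℕ → Matrix (Fin d) (Fin d) ℂ)
    (hU : ∀ n, 1 ≤ n → U n ∈ Matrix.unitaryGroup (Fin d) ℂ)
    (hB : ∀ n, 1 ≤ n →
      B (n + 1) = B n * U n
        - ((R * (B n * U n)).trace) • (1 : Matrix (Fin d) (Fin d) ℂ)) :
    ∀ n, 1 ≤ n →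
      ((R * (B n * (B n)ᴴ)).trace).im = 0 ∧
      (R * (B (n + 1) * (B (n + 1))ᴴ)).trace ≤ (R * (B n * (B n)ᴴ)).trace := by
  intro n hn
  have key : ∀ M : Matrix (Fin d) (Fin d) ℂ, (R * Mᴴ).trace = star ((R * M).trace) := by
    intro M
    rw [← Matrix.trace_conjTranspose, Matrix.conjTranspose_mul, hR.eq, Matrix.trace_mul_comm]
  constructor
  · have h := key (B n * (B n)ᴴ)
    rw [Matrix.conjTranspose_mul, Matrix.conjTranspose_conjTranspose] at h
    exact Complex.conj_eq_iff_im.mp h.symm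
  · have hUU : U n * (U n)ᴴ = 1 := by
      have h := Matrix.mem_unitaryGroup_iff.mp (hU n hn)
      rwa [Matrix.star_eq_conjTranspose] at h
    have hC : (B n * U n) * (B n * U n)ᴴ = B n * (B n)ᴴ := by
      rw [Matrix.conjTranspose_mul, Matrix.mul_assoc, ← Matrix.mul_assoc (U n), hUU,
        Matrix.one_mul]
    have hk := key (B n * U n)
    rw [hB n hn, ← hC]
    generalize B n * U n = C at hk ⊢
    generalize ht : (R * C).trace = t at hk ⊢
    have e : (R * ((C - t • 1) * (C - t • 1)ᴴ)).trace
        = (R * (C * Cᴴ)).trace - t * star t := by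
      simp only [Matrix.conjTranspose_sub, Matrix.conjTranspose_smul, Matrix.conjTranspose_one,
        Matrix.sub_mul, Matrix.mul_sub, Matrix.smul_mul, Matrix.mul_smul, Matrix.one_mul,
        Matrix.mul_one, Matrix.trace_sub, Matrix.trace_smul, hk, ht, htr, smul_eq_mul]
      ring
    rw [e]
    exact sub_le_self _ (mul_star_self_nonneg t)
end

section
/- Detection for the example sequence: let R be Hermitian with trace(R) = 1 and not positive semidefinite, let B₁ be positive definite, and choose the unitaries U₁ = P₊ − P₋ and U_n = P₋ − P₊ for all n ≥ 2. Then the sequence of expectation values w_n = trace(R · B_n B_n†) diverges to −∞; in particular there exists N₀ ∈ ℕ such that w_n < 0 for all n ≥ N₀. -/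
open Matrix ComplexOrder Filter

open scoped MatrixOrder Matrix.Norms.L2Operator in
lemma exists_factor {d : ℕ} {B : Matrix (Fin d) (Fin d) ℂ} (hB : B.PosDef) :
    ∃ D : Matrix (Fin d) (Fin d) ℂ, IsUnit D ∧ B = Dᴴ * D := by
  obtain ⟨y, hy, h⟩ := CStarAlgebra.isStrictlyPositive_iff_eq_star_mul_self.mp
    hB.isStrictlyPositive
  exact ⟨y, hy, h⟩

lemma trace_mul_nonneg_aux {d : ℕ} {A B : Matrix (Fin d) (Fin d) ℂ} (hA : A.PosSemidef)
    (hB : B.PosDef) : 0 ≤ (A * B).trace ∧ ((A * B).trace = 0 → A = 0) := by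
  obtain ⟨D, hD, rfl⟩ := exists_factor hB
  have h := hA.mul_mul_conjTranspose_same D
  have e : (A * (Dᴴ * D)).trace = (D * A * Dᴴ).trace := by
    rw [← Matrix.mul_assoc, Matrix.trace_mul_comm, ← Matrix.mul_assoc]
  rw [e]
  refine ⟨h.trace_nonneg, fun h0 => ?_⟩
  have h1 := h.trace_eq_zero_iff.mp h0
  have hD' : IsUnit Dᴴ := hD.star
  have h2 := (hD'.mul_left_eq_zero).mp h1
  exact (hD.mul_right_eq_zero).mp h2

/-- **Detection for the example sequence.**
Let `R` be Hermitian with `trace R = 1` and not positive semidefinite, let `B 1` be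
positive definite, and let `Pneg` be the orthogonal projection onto the span of the
eigenvectors of `R` with negative eigenvalues (characterized by: `Pneg` is a Hermitian
idempotent commuting with `R`, `R ≥ 0` on the range of `𝟙 - Pneg`, `-R ≥ 0` on the range
of `Pneg`, and `R` is injective on the range of `Pneg`).  For the unitaries
`U 1 = P₊ - P₋`, `U n = P₋ - P₊` (`n ≥ 2`) and the iteration
`B (n+1) = B n * U n - trace(R * B n * U n) • 𝟙`, the expectation values
`w n = trace(R * B n * B nᴴ)` diverge to `-∞`; in particular there exists `N₀` such that
`w n < 0` for all `n ≥ N₀`. -/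
theorem example_sequence_detects
    {d : ℕ} (hd : 1 ≤ d)
    (R : Matrix (Fin d) (Fin d) ℂ) (hR : R.IsHermitian) (htr : R.trace = 1)
    (hNPSD : ¬ R.PosSemidef)
    (Pneg : Matrix (Fin d) (Fin d) ℂ)
    (hP1 : Pnegᴴ = Pneg) (hP2 : Pneg * Pneg = Pneg) (hP3 : R * Pneg = Pneg * R)
    (hP4 : (R * (1 - Pneg)).PosSemidef) (hP5 : (-(R * Pneg)).PosSemidef)
    (hP6 : ∀ x : Fin d → ℂ, Pneg *ᵥ x = x → R *ᵥ x = 0 → x = 0)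
    (B U : ℕ → Matrix (Fin d) (Fin d) ℂ)
    (hB1 : (B 1).PosDef)
    (hU1 : U 1 = (1 - Pneg) - Pneg)
    (hU2 : ∀ n, 2 ≤ n → U n = Pneg - (1 - Pneg))
    (hB : ∀ n, 1 ≤ n →
      B (n + 1) = B n * U n
        - ((R * (B n * U n)).trace) • (1 : Matrix (Fin d) (Fin d) ℂ)) :
    Tendsto (fun n => ((R * (B n * (B n)ᴴ)).trace).re) atTop atBot ∧
      ∃ N₀ : ℕ, ∀ n, N₀ ≤ n → ((R * (B n * (B n)ᴴ)).trace).re < 0 := by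
  set S := (1 - Pneg) - Pneg with hS
  have hSS : S * S = 1 := by
    rw [hS]; simp only [mul_sub, sub_mul, hP2, mul_one, one_mul]; abel
  have hSR : S * R = R * S := by
    rw [hS]; simp only [mul_sub, sub_mul, hP3, mul_one, one_mul]
  have hSH : Sᴴ = S := by
    rw [hS]; simp [hP1]
  have hUH : ∀ n, 1 ≤ n → (U n = S ∨ U n = -S) := by
    intro n hn
    rcases Nat.lt_or_ge 1 n with h | h
    · right; rw [hU2 n h, hS]; abel
    · left; rw [show n = 1 by omega, hU1]
  -- the trace part
  have htr0 : ∀ n, 2 ≤ n → (R * B n).trace = 0 := by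
    intro n hn
    obtain ⟨m, rfl⟩ : ∃ m, n = m + 1 := ⟨n - 1, by omega⟩
    rw [hB m (by omega), mul_sub, Matrix.trace_sub]
    simp [htr]
  -- one step of w
  have hw : ∀ n, 1 ≤ n → (R * (B (n+1) * (B (n+1))ᴴ)).trace
      = (R * (B n * (B n)ᴴ)).trace - (R * (B n * U n)).trace * star (R * (B n * U n)).trace := by
    intro n hn
    have hU : U n * (U n)ᴴ = 1 ∧ U n * R = R * U n := by
      rcases hUH n hn with h | h <;> rw [h] <;> simp [hSH, hSS, hSR]
    obtain ⟨hUU, hUR⟩ := hU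
    rw [hB n hn]
    set t := (R * (B n * U n)).trace with ht
    have h1 : (R * (B n * U n)ᴴ).trace = star t := by
      rw [ht, ← Matrix.trace_conjTranspose, Matrix.conjTranspose_mul R, hR.eq,
        Matrix.trace_mul_comm]
    have h2 : B n * U n * (B n * U n)ᴴ = B n * (B n)ᴴ := by
      rw [Matrix.conjTranspose_mul, Matrix.mul_assoc, ← Matrix.mul_assoc (U n), hUU,
        Matrix.one_mul]
    rw [Matrix.conjTranspose_sub, Matrix.conjTranspose_smul, Matrix.conjTranspose_one,
      sub_mul, mul_sub (B n * U n), h2]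
    simp only [mul_sub, Matrix.trace_sub, Matrix.mul_smul, Matrix.smul_mul, Matrix.trace_smul,
      Matrix.mul_one, Matrix.one_mul, htr, h1, ← ht, smul_eq_mul]
    ring
  -- recursion of X
  set T := (R * S).trace with hT
  have hX : ∀ n, 2 ≤ n → (R * (B (n+1) * S)).trace = T * (R * (B n * S)).trace := by
    intro n hn
    have hUn : U n = -S := by rw [hU2 n hn, hS]; abel
    rw [hB n (by omega), hUn]
    simp only [sub_mul, mul_sub, Matrix.trace_sub, Matrix.mul_neg, Matrix.neg_mul,
      Matrix.trace_neg, Matrix.smul_mul, Matrix.mul_smul, Matrix.trace_smul, Matrix.one_mul,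
      Matrix.mul_assoc, hSS, Matrix.mul_one, htr0 n hn, smul_eq_mul, ← hT]
    ring
  have hX2 : (R * (B 2 * S)).trace = (R * B 1).trace - T * (R * S * B 1).trace := by
    have e : (R * (B 1 * S)).trace = (R * S * B 1).trace := by
      rw [← hSR, ← Matrix.mul_assoc, Matrix.trace_mul_comm, Matrix.mul_assoc]
    rw [hB 1 le_rfl, hU1]
    simp only [sub_mul, mul_sub, Matrix.trace_sub, 
      Matrix.smul_mul, Matrix.mul_smul, Matrix.trace_smul, Matrix.one_mul,
      Matrix.mul_assoc, hSS, Matrix.mul_one, smul_eq_mul, ← hT]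
    rw [e, Matrix.mul_assoc]
    ring
  -- positivity
  obtain ⟨ha, -⟩ := trace_mul_nonneg_aux hP4 hB1
  obtain ⟨hb, hb0⟩ := trace_mul_nonneg_aux hP5 hB1
  have hbne : (-(R * Pneg) * B 1).trace ≠ 0 := by
    intro h
    apply hNPSD
    have h0 : R * Pneg = 0 := neg_eq_zero.mp (hb0 h)
    rw [mul_sub, h0] at hP4
    simpa using hP4
  have hq := hP5.trace_nonneg
  have eR : R = R * (1 - Pneg) - (-(R * Pneg)) := by rw [mul_sub]; simp
  have eS : R * S = R * (1 - Pneg) + (-(R * Pneg)) := by rw [hS, mul_sub]; abel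
  have e1 : (R * B 1).trace
      = (R * (1 - Pneg) * B 1).trace - (-(R * Pneg) * B 1).trace := by
    rw [← Matrix.trace_sub, ← sub_mul, ← eR]
  have e2 : (R * S * B 1).trace
      = (R * (1 - Pneg) * B 1).trace + (-(R * Pneg) * B 1).trace := by
    rw [← Matrix.trace_add, ← add_mul, ← eS]
  have eT : T = 1 + 2 * (-(R * Pneg)).trace := by
    have h1 : (R * (1 - Pneg)).trace - (-(R * Pneg)).trace = 1 := by
      rw [← Matrix.trace_sub, ← eR, htr]
    rw [hT, eS, Matrix.trace_add]
    linear_combination h1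
  rw [e1, e2] at hX2
  generalize (R * (1 - Pneg) * B 1).trace = a at *
  generalize (-(R * Pneg) * B 1).trace = b at *
  generalize (-(R * Pneg)).trace = q at *
  rw [Complex.le_def] at ha hb hq
  simp only [Complex.zero_re, Complex.zero_im] at ha hb hq
  have hbpos : 0 < b.re := by
    refine lt_of_le_of_ne hb.1 fun h => hbne ?_
    apply Complex.ext
    · simp [← h]
    · simp [← hb.2]
  have hX2ne : (R * (B 2 * S)).trace ≠ 0 := by
    intro h
    rw [h, eT] at hX2
    have := congrArg Complex.re hX2
    simp [← ha.2, ← hb.2, ← hq.2] at this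
    nlinarith [mul_nonneg hq.1 ha.1, mul_nonneg hq.1 hb.1]
  have hTn : 1 ≤ ‖T‖ := by
    refine le_trans ?_ (Complex.re_le_norm T)
    rw [eT]; simp; exact hq.1
  set c := ‖(R * (B 2 * S)).trace‖ with hc
  have hcpos : 0 < c := norm_pos_iff.mpr hX2ne
  have hXn : ∀ n, 2 ≤ n → c ≤ ‖(R * (B n * S)).trace‖ := by
    intro n hn
    induction n, hn using Nat.le_induction with
    | base => exact le_rfl
    | succ n hn ih =>
      rw [hX n hn, norm_mul]
      nlinarith [norm_nonneg (R * (B n * S)).trace]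
  have hstep : ∀ n, 2 ≤ n → ((R * (B (n+1) * (B (n+1))ᴴ)).trace).re
      ≤ ((R * (B n * (B n)ᴴ)).trace).re - c ^ 2 := by
    intro n hn
    have hUn : U n = -S := by rw [hU2 n hn, hS]; abel
    rw [hw n (by omega), Complex.sub_re, hUn]
    have h1 : (R * (B n * -S)).trace = -(R * (B n * S)).trace := by
      simp [Matrix.trace_neg]
    have h2 := hXn n hn
    rw [h1]
    generalize (R * (B n * S)).trace = x at *
    have h3 : ((-x) * star (-x)).re = ‖x‖ ^ 2 := by
      have := Complex.mul_conj' (-x)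
      rw [norm_neg] at this
      rw [Complex.star_def, this]
      norm_cast
    rw [h3]
    have : c ^ 2 ≤ ‖x‖ ^ 2 := by gcongr
    linarith
  have hlin : ∀ k : ℕ, ((R * (B (k+2) * (B (k+2))ᴴ)).trace).re
      ≤ ((R * (B 2 * (B 2)ᴴ)).trace).re - k * c ^ 2 := by
    intro k
    induction k with
    | zero => simp
    | succ k ih =>
      have := hstep (k+2) (by omega)
      rw [show k + 1 + 2 = k + 2 + 1 by ring]
      push_cast
      linarith
  have hmain : Tendsto (fun n => ((R * (B n * (B n)ᴴ)).trace).re) atTop atBot := by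
    rw [← tendsto_add_atTop_iff_nat 2]
    refine tendsto_atBot_mono hlin ?_
    have h : Tendsto (fun k : ℕ => (k : ℝ) * c ^ 2) atTop atTop :=
      tendsto_natCast_atTop_atTop.atTop_mul_const (by positivity)
    have h' := tendsto_atBot_add_const_left atTop ((R * (B 2 * (B 2)ᴴ)).trace).re
      (tendsto_neg_atTop_atBot.comp h)
    simpa [sub_eq_add_neg, Function.comp_def] using h'
  exact ⟨hmain, eventually_atTop.mp (hmain.eventually_lt_atBot 0)⟩
end

section
/- Completeness of PPT witnesses: let ρ be a Hermitian complex matrix indexed by ι × κ whose partial transpose ρ^Γ is NOT positive semidefinite. Then there exists a matrix B indexed by ι × κ such that trace(ρ · (B B†)^Γ) < 0; i.e., every NPT state is detected by a witness of the form (B B†)^Γ. -/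
open Matrix ComplexOrder

/-- The partial transpose (with respect to the second tensor factor) of a complex matrix
indexed by `ι × κ`: `(ρ^Γ)_{(i,j),(k,l)} = ρ_{(i,l),(k,j)}`. -/
def partialTranspose {ι κ : Type*} (ρ : Matrix (ι × κ) (ι × κ) ℂ) :
    Matrix (ι × κ) (ι × κ) ℂ :=
  Matrix.of fun p q => ρ (p.1, q.2) (q.1, p.2)

theorem trace_mul_partialTranspose {ι κ : Type*} [Fintype ι] [Fintype κ]
    (ρ σ : Matrix (ι × κ) (ι × κ) ℂ) :
    (ρ * partialTranspose σ).trace = (partialTranspose ρ * σ).trace := by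
  simp only [Matrix.trace, Matrix.diag, Matrix.mul_apply, partialTranspose, Matrix.of_apply,
    Fintype.sum_prod_type]
  refine Finset.sum_congr rfl fun i _ => ?_
  rw [Finset.sum_comm]
  conv_rhs => rw [Finset.sum_comm]
  refine Finset.sum_congr rfl fun k _ => ?_
  rw [Finset.sum_comm]

/-- **Completeness of PPT witnesses.**
If `ρ` is a Hermitian matrix indexed by `ι × κ` whose partial transpose is not positive
semidefinite, then there is a matrix `B` with `trace(ρ * (B * Bᴴ)^Γ) < 0`: every NPT
state is detected by a witness of the form `(B * Bᴴ)^Γ`. -/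
theorem npt_state_detected_by_witness
    {ι κ : Type*} [Fintype ι] [Fintype κ] [DecidableEq ι] [DecidableEq κ]
    [Nonempty ι] [Nonempty κ]
    (ρ : Matrix (ι × κ) (ι × κ) ℂ) (hρ : ρ.IsHermitian)
    (hNPT : ¬ (partialTranspose ρ).PosSemidef) :
    ∃ B : Matrix (ι × κ) (ι × κ) ℂ,
      (ρ * partialTranspose (B * Bᴴ)).trace < 0 := by
  have hH : (partialTranspose ρ).IsHermitian := by
    ext p q
    simp only [Matrix.conjTranspose_apply, partialTranspose, Matrix.of_apply]
    exact hρ.apply _ _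
  have hx : ∃ x : ι × κ → ℂ, ¬ 0 ≤ star x ⬝ᵥ (partialTranspose ρ *ᵥ x) := by
    by_contra! h
    exact hNPT (Matrix.PosSemidef.of_dotProduct_mulVec_nonneg hH h)
  obtain ⟨x, hx⟩ := hx
  obtain ⟨q₀⟩ : Nonempty (ι × κ) := inferInstance
  refine ⟨Matrix.of fun p q => if q = q₀ then x p else 0, ?_⟩
  have hB : (Matrix.of fun p q => if q = q₀ then x p else 0) *
      (Matrix.of fun p q => if q = q₀ then x p else 0)ᴴ = Matrix.vecMulVec x (star x) := by
    ext p q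
    simp [Matrix.mul_apply, Matrix.vecMulVec_apply, apply_ite]
  rw [trace_mul_partialTranspose, hB, Matrix.mul_vecMulVec, Matrix.trace_vecMulVec,
    dotProduct_comm]
  have him : (star x ⬝ᵥ (partialTranspose ρ *ᵥ x)).im = 0 :=
    hH.im_star_dotProduct_mulVec_self x
  rw [Complex.le_def] at hx
  rw [Complex.lt_def]
  refine ⟨?_, by simpa using him⟩
  by_contra hlt
  exact hx ⟨not_lt.mp hlt, by simpa using him.symm⟩
end

section
/- Detection for the optimized iteration: suppose R is Hermitian with trace(R) = 1 and not positive semidefinite, B₁ is positive definite, and the unitaries U_n are chosen optimally, i.e. R · B_n U_n is positive semidefinite for every n ≥ 1. Then the expectation values w_n = trace(R · B_n B_n†) diverge to −∞; in particular there exists N₀ ∈ ℕ such that w_n < 0 for all n ≥ N₀, so the optimized iteration always detects the state. -/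
open Matrix ComplexOrder Filter

open scoped MatrixOrder in
lemma aux_sqrt {d : ℕ} (P Q : Matrix (Fin d) (Fin d) ℂ) (hP : P.PosSemidef) (hQ : Q.PosSemidef)
    (h : P * P = Q * Q) : P = Q :=
  (CFC.mul_self_eq_mul_self_iff P Q hP.nonneg hQ.nonneg).1 h

lemma aux_abs {d : ℕ} (H V : Matrix (Fin d) (Fin d) ℂ) (hH : H.IsHermitian)
    (hV : V ∈ Matrix.unitaryGroup (Fin d) ℂ) (hP : (H * V).PosSemidef) (v : Fin d → ℂ) :
    (star v ⬝ᵥ (H *ᵥ v)).re ≤ (star v ⬝ᵥ ((H * V) *ᵥ v)).re := by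
  have h1 : V * Vᴴ = 1 := Matrix.mem_unitaryGroup_iff.1 hV
  have h2 : Vᴴ * V = 1 := Matrix.mem_unitaryGroup_iff'.1 hV
  have hPh : Vᴴ * H = H * V := by
    have := hP.isHermitian.eq
    rwa [conjTranspose_mul, hH.eq] at this
  have hHP : V * (H * V) = H := by rw [← hPh, ← Matrix.mul_assoc, h1, Matrix.one_mul]
  have hVHV : V * (H * V) * Vᴴ = H * Vᴴ := by rw [hHP]
  have hQ : (V * (H * V) * Vᴴ).PosSemidef := hP.mul_mul_conjTranspose_same V
  have hQh : V * H = H * Vᴴ := by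
    have := hQ.isHermitian.eq
    rw [hVHV, conjTranspose_mul, conjTranspose_conjTranspose, hH.eq] at this
    exact this
  have e1 : (H * V) * (H * V) = H * H := by
    rw [Matrix.mul_assoc, hHP]
  have e2 : (H * Vᴴ) * (H * Vᴴ) = H * H := by
    rw [Matrix.mul_assoc, ← hQh, ← Matrix.mul_assoc Vᴴ, h2, Matrix.one_mul]
  have e3 : H * Vᴴ = H * V := aux_sqrt _ _ (hVHV ▸ hQ) hP (e2.trans e1.symm)
  have key : ((1 - V) * (H * V) * (1 - V)ᴴ).PosSemidef := hP.mul_mul_conjTranspose_same _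
  have e4 : (1 - V) * (H * V) * (1 - V)ᴴ = (H * V - H) + (H * V - H) := by
    have a1 : H * V * Vᴴ = H := by rw [Matrix.mul_assoc, h1, Matrix.mul_one]
    rw [conjTranspose_sub, conjTranspose_one, Matrix.sub_mul, Matrix.one_mul, hHP,
      Matrix.mul_sub, Matrix.mul_one, Matrix.sub_mul, a1, e3]
    abel
  have := key.dotProduct_mulVec_nonneg v
  rw [e4, Matrix.add_mulVec, dotProduct_add, Matrix.sub_mulVec, dotProduct_sub] at this
  have := (Complex.le_def.1 this).1
  simp only [Complex.zero_re, Complex.add_re, Complex.sub_re] at this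
  linarith

open scoped MatrixOrder in
lemma aux_tr {d : ℕ} (P : Matrix (Fin d) (Fin d) ℂ) (hP : P.PosSemidef) (v : Fin d → ℂ) :
    (star v ⬝ᵥ (P *ᵥ v)).re ≤ P.trace.re * ∑ j, ‖v j‖ ^ 2 := by
  obtain ⟨A, rfl⟩ : ∃ A, P = Aᴴ * A := CStarAlgebra.nonneg_iff_eq_star_mul_self.mp hP.nonneg
  have e1 : (star v ⬝ᵥ ((Aᴴ * A) *ᵥ v)).re = ∑ i, ‖(A *ᵥ v) i‖ ^ 2 := by
    rw [← Matrix.mulVec_mulVec, Matrix.dotProduct_mulVec, ← Matrix.star_mulVec]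
    simp only [dotProduct, Pi.star_apply, Complex.re_sum]
    refine Finset.sum_congr rfl fun i _ => ?_
    rw [← Complex.normSq_eq_norm_sq, Complex.star_def, ← Complex.normSq_eq_conj_mul_self,
      Complex.ofReal_re]
  have e2 : (Aᴴ * A).trace.re = ∑ i, ∑ j, ‖A i j‖ ^ 2 := by
    rw [Finset.sum_comm]
    simp only [Matrix.trace, Matrix.diag, Matrix.mul_apply, Complex.re_sum]
    refine Finset.sum_congr rfl fun j _ => Finset.sum_congr rfl fun i _ => ?_
    rw [← Complex.normSq_eq_norm_sq, conjTranspose_apply, Complex.star_def,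
      ← Complex.normSq_eq_conj_mul_self, Complex.ofReal_re]
  rw [e1, e2, Finset.sum_mul]
  refine Finset.sum_le_sum fun i _ => ?_
  calc ‖(A *ᵥ v) i‖ ^ 2 ≤ (∑ j, ‖A i j‖ * ‖v j‖) ^ 2 := by
        gcongr
        refine (norm_sum_le Finset.univ (fun j => A i j * v j)).trans (le_of_eq ?_)
        simp
    _ ≤ _ := Finset.sum_mul_sq_le_sq_mul_sq _ _ _

/-- **Detection for the optimized iteration.**
Let `R` be Hermitian with `trace R = 1` and not positive semidefinite, let `B 1` be
positive definite, and suppose the unitaries in the iteration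
`B (n+1) = B n * U n - trace(R * B n * U n) • 𝟙` are chosen optimally, i.e.
`R * B n * U n` is positive semidefinite for every `n ≥ 1`.  Then the expectation values
`w n = trace(R * B n * B nᴴ)` diverge to `-∞`; in particular there exists `N₀` such that
`w n < 0` for all `n ≥ N₀`, so the optimized iteration always detects the state. -/
theorem optimized_iteration_detects
    {d : ℕ} (hd : 1 ≤ d)
    (R : Matrix (Fin d) (Fin d) ℂ) (hR : R.IsHermitian) (htr : R.trace = 1)
    (hNPSD : ¬ R.PosSemidef)
    (B U : ℕ → Matrix (Fin d) (Fin d) ℂ)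
    (hB1 : (B 1).PosDef)
    (hU : ∀ n, 1 ≤ n → U n ∈ Matrix.unitaryGroup (Fin d) ℂ)
    (hB : ∀ n, 1 ≤ n →
      B (n + 1) = B n * U n
        - ((R * (B n * U n)).trace) • (1 : Matrix (Fin d) (Fin d) ℂ))
    (hopt : ∀ n, 1 ≤ n → (R * (B n * U n)).PosSemidef) :
    Tendsto (fun n => ((R * (B n * (B n)ᴴ)).trace).re) atTop atBot ∧
      ∃ N₀ : ℕ, ∀ n, N₀ ≤ n → ((R * (B n * (B n)ᴴ)).trace).re < 0 := by
  -- real trace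
  have htn : ∀ n, 1 ≤ n → 0 ≤ (R * (B n * U n)).trace.re ∧
      (R * (B n * U n)).trace = (((R * (B n * U n)).trace.re : ℝ) : ℂ) := by
    intro n hn
    have h := Complex.le_def.1 (hopt n hn).trace_nonneg
    refine ⟨h.1, Complex.ext rfl ?_⟩
    rw [Complex.ofReal_im, ← h.2, Complex.zero_im]
  set t : ℕ → ℝ := fun n => (R * (B n * U n)).trace.re with ht
  have ht0 : ∀ n, 1 ≤ n → 0 ≤ t n := fun n hn => (htn n hn).1
  have htt : ∀ n, 1 ≤ n → (R * (B n * U n)).trace = (t n : ℂ) := fun n hn => (htn n hn).2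
  -- recursion of the expectation values
  have hw : ∀ n, 1 ≤ n → ((R * (B (n+1) * (B (n+1))ᴴ)).trace).re
      = ((R * (B n * (B n)ᴴ)).trace).re - t n ^ 2 := by
    intro n hn
    have h1 : U n * (U n)ᴴ = 1 := Matrix.mem_unitaryGroup_iff.1 (hU n hn)
    have hX : (B n * U n) * (B n * U n)ᴴ = B n * (B n)ᴴ := by
      rw [conjTranspose_mul, Matrix.mul_assoc, ← Matrix.mul_assoc (U n), h1, Matrix.one_mul]
    have hX2 : (R * (B n * U n)ᴴ).trace = (t n : ℂ) := by
      have : (R * (B n * U n)ᴴ) = ((B n * U n) * R)ᴴ := by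
        rw [conjTranspose_mul _ R, hR.eq]
      rw [this, trace_conjTranspose, Matrix.trace_mul_comm, htt n hn, Complex.star_def,
        Complex.conj_ofReal]
    have : (R * (B (n+1) * (B (n+1))ᴴ)).trace
        = (R * (B n * (B n)ᴴ)).trace - ((t n ^ 2 : ℝ) : ℂ) := by
      rw [hB n hn, htt n hn, conjTranspose_sub, conjTranspose_smul, conjTranspose_one,
        Complex.star_def, Complex.conj_ofReal, Matrix.sub_mul, Matrix.mul_sub, Matrix.mul_sub, hX]
      simp only [Matrix.mul_sub, Matrix.smul_mul, Matrix.mul_smul, Matrix.one_mul, Matrix.mul_one,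
        Matrix.trace_sub, Matrix.trace_smul, htr, hX2, htt n hn, smul_eq_mul]
      push_cast
      ring
    rw [this, Complex.sub_re, Complex.ofReal_re]
  -- the negative direction
  obtain ⟨v, hv⟩ : ∃ v : Fin d → ℂ, (star v ⬝ᵥ (R *ᵥ v)).re < 0 := by
    by_contra! hcon
    refine hNPSD (Matrix.PosSemidef.of_dotProduct_mulVec_nonneg hR fun x => ?_)
    refine Complex.le_def.2 ⟨hcon x, ?_⟩
    exact (hR.im_star_dotProduct_mulVec_self x).symm
  set q : ℕ → ℝ := fun n => (star v ⬝ᵥ ((R * (B n * U n)) *ᵥ v)).re with hq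
  set l : ℝ := (star v ⬝ᵥ (R *ᵥ v)).re with hl
  have hq0 : ∀ n, 1 ≤ n → 0 ≤ q n := fun n hn =>
    (Complex.le_def.1 ((hopt n hn).dotProduct_mulVec_nonneg v)).1
  have hqs : ∀ n, 1 ≤ n → q n - t n * l ≤ q (n+1) := by
    intro n hn
    have hRB : R * B (n+1) = R * (B n * U n) - (t n : ℂ) • R := by
      rw [hB n hn, htt n hn, Matrix.mul_sub, Matrix.mul_smul, Matrix.mul_one]
    have hH : (R * B (n+1)).IsHermitian := by
      rw [hRB]
      refine (hopt n hn).isHermitian.sub ?_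
      rw [Matrix.IsHermitian, conjTranspose_smul, hR.eq, Complex.star_def, Complex.conj_ofReal]
    have h := aux_abs (R * B (n+1)) (U (n+1)) hH (hU _ (by omega))
      (by rw [Matrix.mul_assoc]; exact hopt _ (by omega)) v
    rw [Matrix.mul_assoc] at h
    refine le_trans (le_of_eq ?_) h
    rw [hRB, Matrix.sub_mulVec, Matrix.smul_mulVec, dotProduct_sub, dotProduct_smul, smul_eq_mul,
      Complex.sub_re, Complex.re_ofReal_mul]
  have ht1 : 0 < t 1 := by
    refine lt_of_le_of_ne (ht0 1 le_rfl) fun h0 => ?_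
    have h1 : (R * (B 1 * U 1)).trace = 0 := by rw [htt 1 le_rfl, ← h0, Complex.ofReal_zero]
    have h2 : R * (B 1 * U 1) = 0 := (hopt 1 le_rfl).trace_eq_zero_iff.1 h1
    have h3 : U 1 * (U 1)ᴴ = 1 := Matrix.mem_unitaryGroup_iff.1 (hU 1 le_rfl)
    have h4 : R * B 1 = 0 := by
      have := congrArg (· * (U 1)ᴴ) h2
      simpa [Matrix.mul_assoc, h3] using this
    have h5 : R = 0 := hB1.isUnit.mul_left_eq_zero.1 h4
    rw [h5] at htr
    simp at htr
  have hqn : ∀ n, 2 ≤ n → t 1 * (-l) ≤ q n := by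
    intro n hn
    induction n, hn using Nat.le_induction with
    | base => linarith [hqs 1 le_rfl, hq0 1 le_rfl]
    | succ n hn ih => nlinarith [hqs n (by omega), ht0 n (by omega)]
  have hc0 : 0 < t 1 * (-l) := mul_pos ht1 (by linarith)
  set S : ℝ := ∑ j, ‖v j‖ ^ 2 with hS
  have hS0 : 0 ≤ S := Finset.sum_nonneg fun _ _ => by positivity
  have htl : ∀ n, 2 ≤ n → t 1 * (-l) ≤ t n * S := fun n hn =>
    (hqn n hn).trans (aux_tr _ (hopt n (by omega)) v)
  have hSp : 0 < S := by
    refine lt_of_le_of_ne hS0 fun h => ?_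
    have := htl 2 le_rfl
    rw [← h] at this
    linarith
  set c : ℝ := t 1 * (-l) / S with hc
  have hcp : 0 < c := div_pos hc0 hSp
  have hct : ∀ n, 2 ≤ n → c ≤ t n := fun n hn => (div_le_iff₀ hSp).2 (htl n hn)
  set w : ℕ → ℝ := fun n => ((R * (B n * (B n)ᴴ)).trace).re with hwd
  have hlin : ∀ k : ℕ, w (k + 2) ≤ w 2 - k * c ^ 2 := by
    intro k
    induction k with
    | zero => simp
    | succ k ih =>
      have h1 : w (k + 2 + 1) = w (k + 2) - t (k + 2) ^ 2 := hw (k + 2) (by omega)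
      have h2 : c ^ 2 ≤ t (k + 2) ^ 2 := pow_le_pow_left₀ hcp.le (hct _ (by omega)) 2
      rw [show k + 1 + 2 = k + 2 + 1 by omega, h1]
      push_cast
      linarith
  have hT : Tendsto w atTop atBot := by
    rw [← tendsto_add_atTop_iff_nat 2]
    refine tendsto_atBot_mono hlin ?_
    have : Tendsto (fun k : ℕ => (k : ℝ) * c ^ 2) atTop atTop :=
      tendsto_natCast_atTop_atTop.atTop_mul_const (by positivity)
    simpa [sub_eq_add_neg] using tendsto_atBot_add_const_left atTop (w 2)
      (tendsto_neg_atTop_atBot.comp this)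
  exact ⟨hT, eventually_atTop.1 (hT.eventually_lt_atBot 0)⟩
end

section
/- Haar integral identity (consequence of the Peter–Weyl theorem): let μ be the Haar probability measure on the compact group U(d) of d×d complex unitary matrices. Then for all d×d complex matrices A and B, d · ∫_{U(d)} trace(A·U) · trace(B·U†) dμ(U) = trace(A·B). -/
open Matrix MeasureTheory

namespace HaarAux

/-- signs flipping the coordinate `i` -/
noncomputable def sgn {d : ℕ} (i k : Fin d) : ℂ := if k = i then -1 else 1

lemma diag_mem {d : ℕ} (i : Fin d) :
    Matrix.diagonal (sgn i) ∈ Matrix.unitaryGroup (Fin d) ℂ := by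
  rw [Matrix.mem_unitaryGroup_iff, star_eq_conjTranspose, Matrix.diagonal_conjTranspose,
    Matrix.diagonal_mul_diagonal, ← Matrix.diagonal_one]
  congr 1
  funext k
  by_cases h : k = i <;> simp [sgn, h]

lemma perm_mem {d : ℕ} (σ : Equiv.Perm (Fin d)) :
    (1 : Matrix (Fin d) (Fin d) ℂ).submatrix σ id ∈ Matrix.unitaryGroup (Fin d) ℂ := by
  rw [Matrix.mem_unitaryGroup_iff, star_eq_conjTranspose, Matrix.conjTranspose_submatrix,
    Matrix.conjTranspose_one]
  have := Matrix.submatrix_mul_equiv (1 : Matrix (Fin d) (Fin d) ℂ) 1 σ (Equiv.refl _) σ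
  simp only [Equiv.coe_refl] at this
  rw [this]
  simp

variable {d : ℕ}
    [MeasurableSpace (Matrix.unitaryGroup (Fin d) ℂ)]
    [BorelSpace (Matrix.unitaryGroup (Fin d) ℂ)]
    (μ : Measure (Matrix.unitaryGroup (Fin d) ℂ))
    [μ.IsHaarMeasure] [IsProbabilityMeasure μ]

lemma entry_cont (i j : Fin d) :
    Continuous fun U : Matrix.unitaryGroup (Fin d) ℂ => (U : Matrix (Fin d) (Fin d) ℂ) i j :=
  continuous_subtype_val.matrix_elem i j


lemma integrable_entry (i j k l : Fin d) :
    Integrable (fun U : Matrix.unitaryGroup (Fin d) ℂ =>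
      (U : Matrix (Fin d) (Fin d) ℂ) i j * star ((U : Matrix (Fin d) (Fin d) ℂ) k l)) μ := by
  have hc : Continuous (fun U : Matrix.unitaryGroup (Fin d) ℂ =>
      (U : Matrix (Fin d) (Fin d) ℂ) i j * star ((U : Matrix (Fin d) (Fin d) ℂ) k l)) :=
    (entry_cont i j).mul (entry_cont k l).star
  refine Integrable.of_bound hc.aestronglyMeasurable 1 (Filter.Eventually.of_forall fun U => ?_)
  rw [norm_mul, norm_star]
  exact mul_le_one₀ (entry_norm_bound_of_unitary U.2 i j) (norm_nonneg _)
    (entry_norm_bound_of_unitary U.2 k l)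

lemma inv_entry (V : Matrix.unitaryGroup (Fin d) ℂ) (i j k l : Fin d) :
    ∫ U : Matrix.unitaryGroup (Fin d) ℂ,
      (V * U : Matrix (Fin d) (Fin d) ℂ) i j * star ((V * U : Matrix (Fin d) (Fin d) ℂ) k l) ∂μ =
    ∫ U : Matrix.unitaryGroup (Fin d) ℂ,
      (U : Matrix (Fin d) (Fin d) ℂ) i j * star ((U : Matrix (Fin d) (Fin d) ℂ) k l) ∂μ :=
  integral_mul_left_eq_self (μ := μ) (fun U : Matrix.unitaryGroup (Fin d) ℂ =>
      (U : Matrix (Fin d) (Fin d) ℂ) i j * star ((U : Matrix (Fin d) (Fin d) ℂ) k l)) V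

lemma off_diag (i j k l : Fin d) (h : i ≠ k) :
    ∫ U : Matrix.unitaryGroup (Fin d) ℂ,
      (U : Matrix (Fin d) (Fin d) ℂ) i j * star ((U : Matrix (Fin d) (Fin d) ℂ) k l) ∂μ = 0 := by
  have := inv_entry μ ⟨_, diag_mem i⟩ i j k l
  simp only [Matrix.diagonal_mul, sgn, h.symm, if_true, if_false, one_mul, neg_mul,
    integral_neg] at this
  exact self_eq_neg.mp this.symm

lemma diag_eq (i j k l : Fin d) :
    ∫ U : Matrix.unitaryGroup (Fin d) ℂ,
      (U : Matrix (Fin d) (Fin d) ℂ) i j * star ((U : Matrix (Fin d) (Fin d) ℂ) i l) ∂μ =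
    ∫ U : Matrix.unitaryGroup (Fin d) ℂ,
      (U : Matrix (Fin d) (Fin d) ℂ) k j * star ((U : Matrix (Fin d) (Fin d) ℂ) k l) ∂μ := by
  have := inv_entry μ ⟨_, perm_mem (Equiv.swap i k)⟩ k j k l
  rw [← this]
  congr 1
  funext U
  have e : ∀ m, ((1 : Matrix (Fin d) (Fin d) ℂ).submatrix (Equiv.swap i k) id
      * (U : Matrix (Fin d) (Fin d) ℂ)) k m = (U : Matrix (Fin d) (Fin d) ℂ) i m := by
    intro m
    simp [Matrix.mul_apply, Matrix.one_apply]
  rw [e, e]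

lemma entry (i j k l : Fin d) :
    (d : ℂ) * ∫ U : Matrix.unitaryGroup (Fin d) ℂ,
      (U : Matrix (Fin d) (Fin d) ℂ) i j * star ((U : Matrix (Fin d) (Fin d) ℂ) k l) ∂μ =
    if i = k then (if j = l then 1 else 0) else 0 := by
  split_ifs with h h'
  all_goals first | (rw [off_diag μ i j k l h, mul_zero]; done) | skip
  all_goals
    subst h
    have hs : ∑ m : Fin d, ∫ U : Matrix.unitaryGroup (Fin d) ℂ,
        (U : Matrix (Fin d) (Fin d) ℂ) m j * star ((U : Matrix (Fin d) (Fin d) ℂ) m l) ∂μ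
        = (1 : Matrix (Fin d) (Fin d) ℂ) l j := by
      rw [← integral_finsetSum _ (fun m _ => integrable_entry μ m j m l)]
      have : ∀ U : Matrix.unitaryGroup (Fin d) ℂ, ∑ m : Fin d,
        (U : Matrix (Fin d) (Fin d) ℂ) m j * star ((U : Matrix (Fin d) (Fin d) ℂ) m l)
          = (1 : Matrix (Fin d) (Fin d) ℂ) l j := by
        intro U
        rw [← Matrix.mem_unitaryGroup_iff'.mp U.2, Matrix.mul_apply]
        exact Finset.sum_congr rfl fun m _ => by rw [mul_comm]; rfl
      simp only [this, integral_const, probReal_univ, one_smul]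
    rw [Finset.sum_congr rfl (fun m _ => diag_eq μ m j i l)] at hs
    rw [Finset.sum_const, Finset.card_univ, Fintype.card_fin, nsmul_eq_mul] at hs
    rw [hs, Matrix.one_apply]
  · rw [if_pos h'.symm]
  · rw [if_neg (Ne.symm h')]

end HaarAux

/-- **Haar integral identity (consequence of the Peter–Weyl theorem).**
Let `μ` be the Haar probability measure on the compact group `U(d)` of `d × d` complex
unitary matrices.  Then for all `d × d` complex matrices `A` and `B`,
`d * ∫ trace(A * U) * trace(B * U†) dμ(U) = trace(A * B)`. -/
theorem haar_integral_trace_identity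
    {d : ℕ}
    [MeasurableSpace (Matrix.unitaryGroup (Fin d) ℂ)]
    [BorelSpace (Matrix.unitaryGroup (Fin d) ℂ)]
    (μ : Measure (Matrix.unitaryGroup (Fin d) ℂ))
    [μ.IsHaarMeasure] [IsProbabilityMeasure μ]
    (A B : Matrix (Fin d) (Fin d) ℂ) :
    (d : ℂ) * ∫ U : Matrix.unitaryGroup (Fin d) ℂ,
        (A * (U : Matrix (Fin d) (Fin d) ℂ)).trace
          * (B * ((U : Matrix (Fin d) (Fin d) ℂ))ᴴ).trace ∂μ
      = (A * B).trace := by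
  have e : ∀ U : Matrix.unitaryGroup (Fin d) ℂ,
      (A * (U : Matrix (Fin d) (Fin d) ℂ)).trace
          * (B * ((U : Matrix (Fin d) (Fin d) ℂ))ᴴ).trace =
      ∑ j, ∑ i, ∑ l, ∑ k, (A j i * B l k) *
        ((U : Matrix (Fin d) (Fin d) ℂ) i j * star ((U : Matrix (Fin d) (Fin d) ℂ) l k)) := by
    intro U
    simp only [Matrix.trace, Matrix.diag_apply, Matrix.mul_apply, Matrix.conjTranspose_apply,
      Finset.sum_mul]
    refine Finset.sum_congr rfl fun j _ => Finset.sum_congr rfl fun i _ => ?_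
    simp only [Finset.mul_sum]
    refine Finset.sum_congr rfl fun l _ => Finset.sum_congr rfl fun k _ => ?_
    ring
  have hi := HaarAux.integrable_entry μ
  simp only [e]
  rw [integral_finsetSum _ fun j _ => integrable_finsetSum _ fun i _ =>
    integrable_finsetSum _ fun l _ => integrable_finsetSum _ fun k _ => (hi i j l k).const_mul _]
  simp_rw [Finset.mul_sum]
  simp only [Matrix.trace, Matrix.diag_apply, Matrix.mul_apply]
  refine Finset.sum_congr rfl fun j _ => ?_
  rw [integral_finsetSum _ fun i _ =>
    integrable_finsetSum _ fun l _ => integrable_finsetSum _ fun k _ => (hi i j l k).const_mul _,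
    Finset.mul_sum]
  refine Finset.sum_congr rfl fun i _ => ?_
  rw [integral_finsetSum _ fun l _ => integrable_finsetSum _ fun k _ =>
    (hi i j l k).const_mul _, Finset.mul_sum]
  have : ∀ l, (d : ℂ) * ∫ U : Matrix.unitaryGroup (Fin d) ℂ, ∑ k, (A j i * B l k) *
        ((U : Matrix (Fin d) (Fin d) ℂ) i j * star ((U : Matrix (Fin d) (Fin d) ℂ) l k)) ∂μ
      = ∑ k, (A j i * B l k) * (if i = l then (if j = k then 1 else 0) else 0) := by
    intro l
    rw [integral_finsetSum _ fun k _ => (hi i j l k).const_mul _, Finset.mul_sum]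
    refine Finset.sum_congr rfl fun k _ => ?_
    rw [integral_const_mul, mul_left_comm, HaarAux.entry]
  simp only [this]
  simp
end

section
/- Single averaging step for the averaged iteration: let R be Hermitian with trace(R) = 1, let A be a Hermitian d×d matrix, and let B be any d×d matrix. Define B′(U) = B·U − trace(R·B·U)·𝟙. Then ∫_{U(d)} trace(A · B′(U) B′(U)†) dμ(U) = trace(A′ · B B†), where A′ = A + (1/d)·[trace(A)·R² − (R·A + A·R)]. -/
open Matrix MeasureTheory

section aux
set_option linter.unusedSectionVars false
variable {d : ℕ}
    [MeasurableSpace (Matrix.unitaryGroup (Fin d) ℂ)]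
    [BorelSpace (Matrix.unitaryGroup (Fin d) ℂ)]
    (μ : Measure (Matrix.unitaryGroup (Fin d) ℂ))
    [μ.IsHaarMeasure] [IsProbabilityMeasure μ]

theorem aux_integrable (i j k l : Fin d) :
    Integrable (fun U : Matrix.unitaryGroup (Fin d) ℂ =>
      (U : Matrix (Fin d) (Fin d) ℂ) i j * star ((U : Matrix (Fin d) (Fin d) ℂ) k l)) μ := by
  refine Integrable.of_bound (C := 1) ?_ (Filter.Eventually.of_forall fun U => ?_)
  · apply Continuous.aestronglyMeasurable
    have h : Continuous (fun U : Matrix.unitaryGroup (Fin d) ℂ =>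
      (U : Matrix (Fin d) (Fin d) ℂ)) := continuous_subtype_val
    exact (h.matrix_elem i j).mul (h.matrix_elem k l).star
  · rw [norm_mul, norm_star]
    exact mul_le_one₀ (entry_norm_bound_of_unitary U.2 i j) (norm_nonneg _)
      (entry_norm_bound_of_unitary U.2 k l)

theorem aux_shift (V : Matrix.unitaryGroup (Fin d) ℂ) (i j k l : Fin d) :
    ∫ U : Matrix.unitaryGroup (Fin d) ℂ,
      ((V : Matrix (Fin d) (Fin d) ℂ) * (U : Matrix (Fin d) (Fin d) ℂ)) i j
        * star (((V : Matrix (Fin d) (Fin d) ℂ) * (U : Matrix (Fin d) (Fin d) ℂ)) k l) ∂μ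
    = ∫ U : Matrix.unitaryGroup (Fin d) ℂ,
      (U : Matrix (Fin d) (Fin d) ℂ) i j * star ((U : Matrix (Fin d) (Fin d) ℂ) k l) ∂μ :=
  integral_mul_left_eq_self (μ := μ) (fun U : Matrix.unitaryGroup (Fin d) ℂ =>
    (U : Matrix (Fin d) (Fin d) ℂ) i j * star ((U : Matrix (Fin d) (Fin d) ℂ) k l)) V

theorem aux_ne (i j k l : Fin d) (h : i ≠ k) :
    ∫ U : Matrix.unitaryGroup (Fin d) ℂ,
      (U : Matrix (Fin d) (Fin d) ℂ) i j * star ((U : Matrix (Fin d) (Fin d) ℂ) k l) ∂μ = 0 := by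
  have hV : (diagonal (fun a : Fin d => if a = i then (-1 : ℂ) else 1))
      ∈ Matrix.unitaryGroup (Fin d) ℂ := by
    rw [Matrix.mem_unitaryGroup_iff, star_eq_conjTranspose, diagonal_conjTranspose,
      diagonal_mul_diagonal, ← diagonal_one]
    congr 1
    funext a
    by_cases ha : a = i <;> simp [ha]
  have := aux_shift μ ⟨_, hV⟩ i j k l
  simp only [diagonal_mul, if_true, if_neg h.symm, one_mul, neg_mul, integral_neg] at this
  exact self_eq_neg.mp this.symm

theorem aux_eq (i j k l : Fin d) :
    ∫ U : Matrix.unitaryGroup (Fin d) ℂ,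
      (U : Matrix (Fin d) (Fin d) ℂ) i j * star ((U : Matrix (Fin d) (Fin d) ℂ) i l) ∂μ =
    ∫ U : Matrix.unitaryGroup (Fin d) ℂ,
      (U : Matrix (Fin d) (Fin d) ℂ) k j * star ((U : Matrix (Fin d) (Fin d) ℂ) k l) ∂μ := by
  have hV : ((Equiv.swap i k).permMatrix ℂ) ∈ Matrix.unitaryGroup (Fin d) ℂ := by
    rw [Matrix.mem_unitaryGroup_iff, star_eq_conjTranspose, Matrix.conjTranspose_permMatrix,
      ← Matrix.permMatrix_mul]
    simp
  have := aux_shift μ ⟨_, hV⟩ i j i l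
  simpa [Equiv.Perm.permMatrix, PEquiv.toMatrix_toPEquiv_mul] using this.symm

theorem aux_moment (i j k l : Fin d) :
    ∫ U : Matrix.unitaryGroup (Fin d) ℂ,
      (U : Matrix (Fin d) (Fin d) ℂ) i j * star ((U : Matrix (Fin d) (Fin d) ℂ) k l) ∂μ
      = if i = k ∧ j = l then (d : ℂ)⁻¹ else 0 := by
  by_cases h : i = k
  · subst h
    have hd : (d : ℂ) ≠ 0 := by
      have := i.pos
      exact_mod_cast this.ne'
    have h1 : ∑ m : Fin d, ∫ U : Matrix.unitaryGroup (Fin d) ℂ,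
      (U : Matrix (Fin d) (Fin d) ℂ) m j * star ((U : Matrix (Fin d) (Fin d) ℂ) m l) ∂μ
        = (1 : Matrix (Fin d) (Fin d) ℂ) l j := by
      rw [← integral_finsetSum _ (fun m _ => aux_integrable μ m j m l)]
      have : ∀ U : Matrix.unitaryGroup (Fin d) ℂ,
        ∑ m, (U : Matrix (Fin d) (Fin d) ℂ) m j * star ((U : Matrix (Fin d) (Fin d) ℂ) m l)
          = (1 : Matrix (Fin d) (Fin d) ℂ) l j := by
        intro U
        rw [← Matrix.mem_unitaryGroup_iff'.mp U.2, Matrix.mul_apply]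
        refine Finset.sum_congr rfl fun m _ => ?_
        rw [mul_comm]; rfl
      simp only [this]
      simp
    rw [Finset.sum_congr rfl (fun m _ => aux_eq μ m j i l), Finset.sum_const] at h1
    simp only [Finset.card_univ, Fintype.card_fin, nsmul_eq_mul, Matrix.one_apply] at h1
    rw [eq_comm] at h1
    by_cases hj : j = l
    · simp only [hj, if_true, and_self] at h1 ⊢
      exact eq_inv_of_mul_eq_one_right h1.symm
    · have hj' : ¬ l = j := fun h => hj h.symm
      simp only [hj', hj, if_false, and_false] at h1 ⊢
      exact (mul_eq_zero.mp h1.symm).resolve_left hd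
  · simp only [h, false_and, if_false]
    exact aux_ne μ i j k l h

theorem aux_expand (X Y U : Matrix (Fin d) (Fin d) ℂ) :
    (X * U).trace * star ((Y * U).trace) =
      ∑ i, ∑ j, ∑ k, ∑ l, (X j i * star (Y l k)) * (U i j * star (U k l)) := by
  have e : ∀ Z : Matrix (Fin d) (Fin d) ℂ, (Z * U).trace = ∑ i, ∑ j, Z j i * U i j := by
    intro Z
    rw [Finset.sum_comm]
    rfl
  rw [e, e, star_sum]
  simp only [star_sum, star_mul']
  simp only [Finset.sum_mul]
  simp only [Finset.mul_sum]
  refine Finset.sum_congr rfl fun i _ => ?_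
  refine Finset.sum_congr rfl fun j _ => ?_
  refine Finset.sum_congr rfl fun k _ => ?_
  refine Finset.sum_congr rfl fun l _ => ?_
  ring

theorem aux_int2 (X Y : Matrix (Fin d) (Fin d) ℂ) :
    Integrable (fun U : Matrix.unitaryGroup (Fin d) ℂ =>
      (X * (U : Matrix (Fin d) (Fin d) ℂ)).trace
        * star ((Y * (U : Matrix (Fin d) (Fin d) ℂ)).trace)) μ := by
  simp only [aux_expand]
  exact integrable_finsetSum _ fun i _ => integrable_finsetSum _ fun j _ =>
    integrable_finsetSum _ fun k _ => integrable_finsetSum _ fun l _ =>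
      (aux_integrable μ i j k l).const_mul _

theorem aux_moment2 (X Y : Matrix (Fin d) (Fin d) ℂ) :
    ∫ U : Matrix.unitaryGroup (Fin d) ℂ,
      (X * (U : Matrix (Fin d) (Fin d) ℂ)).trace
        * star ((Y * (U : Matrix (Fin d) (Fin d) ℂ)).trace) ∂μ
      = (d : ℂ)⁻¹ * (X * Yᴴ).trace := by
  simp only [aux_expand]
  have I4 := fun i j k l => (aux_integrable μ i j k l).const_mul (X j i * star (Y l k))
  have I3 := fun i j k => integrable_finsetSum Finset.univ fun l _ => I4 i j k l
  have I2 := fun i j => integrable_finsetSum Finset.univ fun k _ => I3 i j k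
  have I1 := fun i => integrable_finsetSum Finset.univ fun j _ => I2 i j
  rw [integral_finsetSum _ fun i _ => I1 i]
  simp only [integral_finsetSum _ fun j _ => I2 _ j, integral_finsetSum _ fun k _ => I3 _ _ k,
    integral_finsetSum _ fun l _ => I4 _ _ _ l, integral_const_mul, aux_moment]
  simp only [ite_and, mul_ite, mul_zero, Finset.sum_ite_eq, Finset.mem_univ, if_true,
    Finset.sum_ite_irrel, Finset.sum_const_zero]
  rw [Finset.sum_comm, Matrix.trace, Finset.mul_sum]
  refine Finset.sum_congr rfl fun j _ => ?_
  rw [Matrix.diag_apply, Matrix.mul_apply, Finset.mul_sum]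
  refine Finset.sum_congr rfl fun i _ => ?_
  rw [conjTranspose_apply, mul_comm]

theorem aux_point (R A B U : Matrix (Fin d) (Fin d) ℂ) (hA : A.IsHermitian) (hU : U * Uᴴ = 1) :
    (A * ((B * U - ((R * (B * U)).trace) • (1 : Matrix (Fin d) (Fin d) ℂ))
      * (B * U - ((R * (B * U)).trace) • (1 : Matrix (Fin d) (Fin d) ℂ))ᴴ)).trace
    = (A * (B * Bᴴ)).trace - (A * B * U).trace * star ((R * B * U).trace)
      - (R * B * U).trace * star ((A * B * U).trace)
      + A.trace * ((R * B * U).trace * star ((R * B * U).trace)) := by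
  have h1 : star ((A * B * U).trace) = (A * (B * U)ᴴ).trace := by
    rw [← trace_conjTranspose, Matrix.mul_assoc, conjTranspose_mul, hA.eq, trace_mul_comm]
  have h2 : (B * U) * (B * U)ᴴ = B * Bᴴ := by
    rw [conjTranspose_mul, Matrix.mul_assoc, ← Matrix.mul_assoc U, hU, Matrix.one_mul]
  rw [h1, ← Matrix.mul_assoc R, conjTranspose_sub, conjTranspose_smul, conjTranspose_one,
    Matrix.sub_mul, Matrix.mul_sub, Matrix.mul_sub, h2]
  simp only [Matrix.mul_sub, Matrix.mul_smul, Matrix.smul_mul, Matrix.mul_one, Matrix.one_mul,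
    trace_sub, trace_smul, smul_eq_mul, ← Matrix.mul_assoc]
  ring

end aux

/-- **Single averaging step for the averaged iteration.**
Let `μ` be the Haar probability measure on `U(d)`, let `R` be Hermitian with
`trace R = 1`, let `A` be Hermitian and `B` arbitrary.  With
`B′(U) = B * U - trace(R * B * U) • 𝟙`, one has
`∫ trace(A * B′(U) * B′(U)ᴴ) dμ(U) = trace(A′ * B * Bᴴ)` where
`A′ = A + (1/d) • (trace(A) • R² - (R * A + A * R))`. -/
theorem averaged_iteration_single_step
    {d : ℕ}
    [MeasurableSpace (Matrix.unitaryGroup (Fin d) ℂ)]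
    [BorelSpace (Matrix.unitaryGroup (Fin d) ℂ)]
    (μ : Measure (Matrix.unitaryGroup (Fin d) ℂ))
    [μ.IsHaarMeasure] [IsProbabilityMeasure μ]
    (R A B : Matrix (Fin d) (Fin d) ℂ)
    (hR : R.IsHermitian) (htrR : R.trace = 1) (hA : A.IsHermitian) :
    ∫ U : Matrix.unitaryGroup (Fin d) ℂ,
        (A * ((B * (U : Matrix (Fin d) (Fin d) ℂ)
                - ((R * (B * (U : Matrix (Fin d) (Fin d) ℂ))).trace)
                  • (1 : Matrix (Fin d) (Fin d) ℂ))
              * (B * (U : Matrix (Fin d) (Fin d) ℂ)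
                - ((R * (B * (U : Matrix (Fin d) (Fin d) ℂ))).trace)
                  • (1 : Matrix (Fin d) (Fin d) ℂ))ᴴ)).trace ∂μ
      = ((A + ((d : ℂ))⁻¹ • (A.trace • R ^ 2 - (R * A + A * R))) * (B * Bᴴ)).trace := by

  have hp : ∀ U : Matrix.unitaryGroup (Fin d) ℂ, _ := fun U =>
    aux_point R A B (U : Matrix (Fin d) (Fin d) ℂ) hA (Matrix.mem_unitaryGroup_iff.mp U.2)
  simp only [hp]
  have i1 := aux_int2 μ (A * B) (R * B)
  have i2 := aux_int2 μ (R * B) (A * B)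
  have i3 := (aux_int2 μ (R * B) (R * B)).const_mul A.trace
  have i0 : Integrable (fun _ : Matrix.unitaryGroup (Fin d) ℂ => (A * (B * Bᴴ)).trace) μ :=
    integrable_const _
  have i01 : Integrable (fun U : Matrix.unitaryGroup (Fin d) ℂ => (A * (B * Bᴴ)).trace
      - (A * B * (U : Matrix (Fin d) (Fin d) ℂ)).trace
        * star (R * B * (U : Matrix (Fin d) (Fin d) ℂ)).trace) μ := i0.sub i1
  have i012 : Integrable (fun U : Matrix.unitaryGroup (Fin d) ℂ => (A * (B * Bᴴ)).trace
      - (A * B * (U : Matrix (Fin d) (Fin d) ℂ)).trace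
        * star (R * B * (U : Matrix (Fin d) (Fin d) ℂ)).trace
      - (R * B * (U : Matrix (Fin d) (Fin d) ℂ)).trace
        * star (A * B * (U : Matrix (Fin d) (Fin d) ℂ)).trace) μ := i01.sub i2
  rw [integral_add i012 i3, integral_sub i01 i2, integral_sub i0 i1,
    integral_const_mul, aux_moment2, aux_moment2, aux_moment2]
  have t1 : (A * B * (R * B)ᴴ).trace = (R * A * (B * Bᴴ)).trace := by
    rw [conjTranspose_mul, hR.eq, ← Matrix.mul_assoc, trace_mul_comm]
    simp only [Matrix.mul_assoc]
  have t2 : (R * B * (A * B)ᴴ).trace = (A * R * (B * Bᴴ)).trace := by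
    rw [conjTranspose_mul, hA.eq, ← Matrix.mul_assoc, trace_mul_comm]
    simp only [Matrix.mul_assoc]
  have t3 : (R * B * (R * B)ᴴ).trace = (R ^ 2 * (B * Bᴴ)).trace := by
    rw [conjTranspose_mul, hR.eq, ← Matrix.mul_assoc, trace_mul_comm, pow_two]
    simp only [Matrix.mul_assoc]
  rw [t1, t2, t3]
  simp only [Matrix.add_mul, Matrix.sub_mul, Matrix.smul_mul, trace_add, trace_sub, trace_smul,
    smul_eq_mul, integral_const, probReal_univ, one_smul]
  ring
end

section
/- Recursion formula for the averaged iteration: let R be Hermitian with trace(R) = 1 and let B₁ be any d×d matrix. For unitaries U₁, …, U_{n−1} define B_{k+1} = B_k U_k − trace(R B_k U_k)·𝟙 and w_n = trace(R · B_n B_n†). Define the matrices A₁ = R and A_{k+1} = A_k + (1/d)·[trace(A_k)·R² − (R·A_k + A_k·R)]. Then for every n ≥ 1, the iterated Haar average ∫···∫ w_n(R, B₁, U₁, …, U_{n−1}) dμ(U₁)···dμ(U_{n−1}) equals trace(A_n · B₁ B₁†). -/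
open Matrix MeasureTheory

/-- The witness iteration: `witnessOpSeq R B₁ Us 0 = B₁` (playing the role of `B 1`) and
`witnessOpSeq R B₁ Us (k+1) = Bₖ * Us k - trace(R * Bₖ * Us k) • 𝟙`, where
`Bₖ = witnessOpSeq R B₁ Us k`.  Thus `witnessOpSeq R B₁ Us (n-1)` is the paper's `B n`,
built from the unitaries `U₁ = Us 0, …, U_{n-1} = Us (n-2)`. -/
noncomputable def witnessOpSeq {d : ℕ} (R B₁ : Matrix (Fin d) (Fin d) ℂ)
    (Us : ℕ → Matrix (Fin d) (Fin d) ℂ) : ℕ → Matrix (Fin d) (Fin d) ℂ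
  | 0 => B₁
  | k + 1 =>
      witnessOpSeq R B₁ Us k * Us k
        - ((R * (witnessOpSeq R B₁ Us k * Us k)).trace) • (1 : Matrix (Fin d) (Fin d) ℂ)

/-- The averaged-iteration operators: `avgOpSeq R 0 = R` (playing the role of `A 1`) and
`avgOpSeq R k` is the paper's `A (k+1)`, via
`A_{k+1} = A_k + (1/d) • (trace(A_k) • R² - (R * A_k + A_k * R))`. -/
noncomputable def avgOpSeq {d : ℕ} (R : Matrix (Fin d) (Fin d) ℂ) : ℕ → Matrix (Fin d) (Fin d) ℂ
  | 0 => R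
  | k + 1 =>
      avgOpSeq R k
        + ((d : ℂ))⁻¹ • ((avgOpSeq R k).trace • R ^ 2
            - (R * avgOpSeq R k + avgOpSeq R k * R))


section Helpers

variable {d : ℕ}

local notation "UG" => Matrix.unitaryGroup (Fin d) ℂ
local notation "Mat" => Matrix (Fin d) (Fin d) ℂ

theorem secondCountable_unitary : SecondCountableTopology (Matrix.unitaryGroup (Fin d) ℂ) := by
  have : SecondCountableTopology (Matrix (Fin d) (Fin d) ℂ) :=
    inferInstanceAs (SecondCountableTopology (Fin d → Fin d → ℂ))
  exact TopologicalSpace.Subtype.secondCountableTopology _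

theorem compactSpace_unitary : CompactSpace (Matrix.unitaryGroup (Fin d) ℂ) := by
  have hK : IsCompact (Set.pi Set.univ fun _ : Fin d => Set.pi Set.univ fun _ : Fin d =>
      Metric.closedBall (0 : ℂ) 1) :=
    isCompact_univ_pi fun _ => isCompact_univ_pi fun _ => isCompact_closedBall _ _
  have hcl : IsClosed ((Matrix.unitaryGroup (Fin d) ℂ : Set (Matrix (Fin d) (Fin d) ℂ))) := by
    have : (Matrix.unitaryGroup (Fin d) ℂ : Set (Matrix (Fin d) (Fin d) ℂ))
        = {M | M * star M = 1} := by
      ext M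
      exact Matrix.mem_unitaryGroup_iff
    rw [this]
    exact isClosed_eq (by fun_prop) continuous_const
  refine (isCompact_iff_compactSpace
    (s := (Matrix.unitaryGroup (Fin d) ℂ : Set (Matrix (Fin d) (Fin d) ℂ)))).mp ?_
  refine IsCompact.of_isClosed_subset (X := Matrix (Fin d) (Fin d) ℂ) hK hcl ?_
  intro M hM i _ j _
  rw [mem_closedBall_zero_iff]
  exact entry_norm_bound_of_unitary hM i j

theorem integrable_of_cont {X : Type*} [TopologicalSpace X] [CompactSpace X]
    [MeasurableSpace X] [OpensMeasurableSpace X] (ν : Measure X) [IsFiniteMeasure ν]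
    {f : X → ℂ} (hf : Continuous f) : Integrable f ν :=
  hf.integrable_of_hasCompactSupport (HasCompactSupport.of_compactSpace f)

section Schur

variable [MeasurableSpace (Matrix.unitaryGroup (Fin d) ℂ)]
    [BorelSpace (Matrix.unitaryGroup (Fin d) ℂ)]
    (μ : Measure (Matrix.unitaryGroup (Fin d) ℂ))
    [μ.IsHaarMeasure] [IsProbabilityMeasure μ]

theorem cont_coe : Continuous fun U : UG => (U : Mat) := continuous_subtype_val

theorem cont_entry (i j : Fin d) : Continuous fun U : UG => (U : Mat) i j :=
  cont_coe.matrix_elem i j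

theorem moment_offdiag (i j k l : Fin d) (h : i ≠ k) :
    ∫ U : UG, (U : Mat) i j * star ((U : Mat) k l) ∂μ = 0 := by
  let D : Mat := Matrix.diagonal fun a => if a = i then -1 else 1
  have hD : D ∈ Matrix.unitaryGroup (Fin d) ℂ := by
    rw [Matrix.mem_unitaryGroup_iff, Matrix.star_eq_conjTranspose, Matrix.diagonal_conjTranspose,
      Matrix.diagonal_mul_diagonal, ← Matrix.diagonal_one]
    congr 1
    ext a
    by_cases ha : a = i <;> simp [ha]
  have key := integral_mul_left_eq_self (μ := μ)
    (fun U : UG => (U : Mat) i j * star ((U : Mat) k l)) ⟨D, hD⟩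
  have : ∀ U : UG, (((⟨D, hD⟩ * U : UG) : Mat) i j * star (((⟨D, hD⟩ * U : UG) : Mat) k l))
      = - ((U : Mat) i j * star ((U : Mat) k l)) := by
    intro U
    simp [D, Matrix.diagonal_mul, h.symm]
  simp only [this] at key
  rw [integral_neg] at key
  exact self_eq_neg.mp key.symm

theorem moment_swap (i j k l : Fin d) :
    ∫ U : UG, (U : Mat) i j * star ((U : Mat) i l) ∂μ
      = ∫ U : UG, (U : Mat) k j * star ((U : Mat) k l) ∂μ := by
  let D : Mat := (Equiv.swap i k).permMatrix ℂ
  have hD : D ∈ Matrix.unitaryGroup (Fin d) ℂ := by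
    rw [Matrix.mem_unitaryGroup_iff, Matrix.star_eq_conjTranspose, Matrix.conjTranspose_permMatrix,
      ← Matrix.permMatrix_mul]
    simp
  have key := integral_mul_left_eq_self (μ := μ)
    (fun U : UG => (U : Mat) k j * star ((U : Mat) k l)) ⟨D, hD⟩
  rw [← key]
  congr 1
  ext U
  have : ∀ b, (((⟨D, hD⟩ * U : UG) : Mat) k b) = (U : Mat) i b := by
    intro b
    simp [D, Equiv.Perm.permMatrix, PEquiv.toMatrix_toPEquiv_mul]
  simp only [this]

theorem moment_diag (i j l : Fin d) :
    ∫ U : UG, (U : Mat) i j * star ((U : Mat) i l) ∂μ = (d : ℂ)⁻¹ * (if j = l then 1 else 0) := by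
  have := compactSpace_unitary (d := d)
  have hd : (d : ℂ) ≠ 0 := by
    have := i.pos
    exact_mod_cast this.ne'
  have h1 : ∑ k : Fin d, ∫ U : UG, (U : Mat) k j * star ((U : Mat) k l) ∂μ
      = if j = l then 1 else 0 := by
    rw [← integral_finsetSum]
    · have : ∀ U : UG, ∑ k : Fin d, (U : Mat) k j * star ((U : Mat) k l)
          = if j = l then 1 else 0 := by
        intro U
        have h := congrFun (congrFun (Matrix.mem_unitaryGroup_iff'.mp U.2) l) j
        rw [Matrix.mul_apply, Matrix.one_apply] at h
        simp only [Matrix.star_apply] at h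
        simp only [eq_comm (a := j), ← h]
        exact Finset.sum_congr rfl fun _ _ => mul_comm _ _
      simp only [this]
      simp
    · intro k _
      exact integrable_of_cont μ ((cont_entry k j).mul (cont_entry k l).star)
  have h2 : ∑ k : Fin d, ∫ U : UG, (U : Mat) k j * star ((U : Mat) k l) ∂μ
      = d * ∫ U : UG, (U : Mat) i j * star ((U : Mat) i l) ∂μ := by
    rw [Finset.sum_congr rfl fun k _ => moment_swap μ k j i l]
    simp
  rw [← h1, h2]
  field_simp

theorem cont_trace (X : Mat) : Continuous fun U : UG => (X * (U : Mat)).trace :=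
  (continuous_const.matrix_mul cont_coe).matrix_trace

theorem schur (X Y : Mat) :
    ∫ U : UG, (X * (U : Mat)).trace * star ((Y * (U : Mat)).trace) ∂μ
      = (d : ℂ)⁻¹ * (X * Yᴴ).trace := by
  have := compactSpace_unitary (d := d)
  have hexp : ∀ U : UG, (X * (U : Mat)).trace * star ((Y * (U : Mat)).trace)
      = ∑ a, ∑ b, ∑ a', ∑ b', (X a b * star (Y a' b')) *
          ((U : Mat) b a * star ((U : Mat) b' a')) := by
    intro U
    simp only [Matrix.trace, Matrix.diag_apply, Matrix.mul_apply, star_sum]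
    rw [Finset.sum_mul]
    refine Finset.sum_congr rfl fun a _ => ?_
    rw [Finset.sum_mul]
    refine Finset.sum_congr rfl fun b _ => ?_
    rw [Finset.mul_sum]
    refine Finset.sum_congr rfl fun a' _ => ?_
    rw [Finset.mul_sum]
    refine Finset.sum_congr rfl fun b' _ => ?_
    rw [star_mul']
    ring
  have hint : ∀ a b a' b' : Fin d, Integrable (fun U : UG => (X a b * star (Y a' b')) *
          ((U : Mat) b a * star ((U : Mat) b' a'))) μ := fun a b a' b' =>
    integrable_of_cont μ (continuous_const.mul ((cont_entry b a).mul (cont_entry b' a').star))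
  simp only [hexp]
  have hval : ∀ a b a' b' : Fin d, ∫ U : UG, (X a b * star (Y a' b')) *
          ((U : Mat) b a * star ((U : Mat) b' a')) ∂μ
      = if b = b' then (if a = a' then (d : ℂ)⁻¹ * (X a b * star (Y a' b')) else 0) else 0 := by
    intro a b a' b'
    rw [integral_const_mul]
    by_cases hb : b = b'
    · subst hb
      rw [moment_diag]
      by_cases ha : a = a' <;> simp [ha, mul_comm]
    · rw [moment_offdiag μ _ _ _ _ hb]
      simp [hb]
  rw [integral_finsetSum _ fun a _ => integrable_finsetSum _ fun b _ => integrable_finsetSum _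
    fun a' _ => integrable_finsetSum _ fun b' _ => hint a b a' b']
  simp only [Matrix.trace, Matrix.diag_apply, Matrix.mul_apply, Finset.mul_sum,
    Matrix.conjTranspose_apply]
  refine Finset.sum_congr rfl fun a _ => ?_
  rw [integral_finsetSum _ fun b _ => integrable_finsetSum _
    fun a' _ => integrable_finsetSum _ fun b' _ => hint a b a' b']
  refine Finset.sum_congr rfl fun b _ => ?_
  rw [integral_finsetSum _ fun a' _ => integrable_finsetSum _ fun b' _ => hint a b a' b']
  simp only [fun a' => integral_finsetSum Finset.univ fun b' _ => hint a b a' b', hval]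
  simp

/-- One averaging step. -/
noncomputable def stepOp (R A : Matrix (Fin d) (Fin d) ℂ) : Matrix (Fin d) (Fin d) ℂ :=
  A + ((d : ℂ))⁻¹ • (A.trace • R ^ 2 - (R * A + A * R))

theorem one_step (R A B : Mat) (hR : R.IsHermitian) :
    ∫ U : UG, (A * ((B * (U : Mat) - (R * (B * (U : Mat))).trace • (1 : Mat)) *
        (B * (U : Mat) - (R * (B * (U : Mat))).trace • (1 : Mat))ᴴ)).trace ∂μ
      = (stepOp R A * (B * Bᴴ)).trace := by
  have := compactSpace_unitary (d := d)
  have hexp : ∀ U : UG, (A * ((B * (U : Mat) - (R * (B * (U : Mat))).trace • (1 : Mat)) *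
        (B * (U : Mat) - (R * (B * (U : Mat))).trace • (1 : Mat))ᴴ)).trace
      = (A * (B * Bᴴ)).trace
        - ((A * B) * (U : Mat)).trace * star (((R * B) * (U : Mat)).trace)
        - ((R * B) * (U : Mat)).trace * star (((Aᴴ * B) * (U : Mat)).trace)
        + A.trace * (((R * B) * (U : Mat)).trace * star (((R * B) * (U : Mat)).trace)) := by
    intro U
    have hU : (U : Mat) * (U : Mat)ᴴ = 1 := Matrix.mem_unitaryGroup_iff.mp U.2
    have h1 : star (((Aᴴ * B) * (U : Mat)).trace) = (A * ((U : Mat)ᴴ * Bᴴ)).trace := by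
      rw [← Matrix.trace_conjTranspose]
      simp only [Matrix.conjTranspose_mul, Matrix.conjTranspose_conjTranspose]
      rw [← Matrix.mul_assoc, Matrix.trace_mul_comm]
    have h2 : B * (U : Mat) * ((U : Mat)ᴴ * Bᴴ) = B * Bᴴ := by
      rw [Matrix.mul_assoc, ← Matrix.mul_assoc (U : Mat), hU, Matrix.one_mul]
    rw [h1, ← Matrix.mul_assoc R]
    simp only [Matrix.conjTranspose_sub, Matrix.conjTranspose_smul, Matrix.conjTranspose_one,
      Matrix.conjTranspose_mul, Matrix.sub_mul, Matrix.mul_sub, h2, Matrix.trace_sub,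
      Matrix.smul_mul, Matrix.mul_smul, Matrix.trace_smul, Matrix.mul_one, Matrix.one_mul,
      smul_eq_mul, Matrix.mul_assoc]
    ring
  simp only [hexp]
  have hI : ∀ X Y : Mat, Integrable (fun U : UG => (X * (U : Mat)).trace *
      star ((Y * (U : Mat)).trace)) μ := fun X Y =>
    integrable_of_cont μ ((cont_trace X).mul (cont_trace Y).star)
  have hI1 : Integrable (fun U : UG => (A * (B * Bᴴ)).trace
      - ((A * B) * (U : Mat)).trace * star (((R * B) * (U : Mat)).trace)) μ :=
    (integrable_const _).sub (hI _ _)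
  have hI2 : Integrable (fun U : UG => (A * (B * Bᴴ)).trace
      - ((A * B) * (U : Mat)).trace * star (((R * B) * (U : Mat)).trace)
      - ((R * B) * (U : Mat)).trace * star (((Aᴴ * B) * (U : Mat)).trace)) μ :=
    hI1.sub (hI _ _)
  rw [integral_add hI2 ((hI _ _).const_mul _), integral_sub hI1 (hI _ _),
    integral_sub (integrable_const _) (hI _ _), integral_const_mul, schur, schur, schur]
  have e1 : (A * B * (R * B)ᴴ).trace = (R * A * (B * Bᴴ)).trace := by
    rw [Matrix.conjTranspose_mul, hR.eq, ← Matrix.mul_assoc, Matrix.trace_mul_comm]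
    simp only [Matrix.mul_assoc]
  have e2 : (R * B * (Aᴴ * B)ᴴ).trace = (A * R * (B * Bᴴ)).trace := by
    rw [Matrix.conjTranspose_mul, Matrix.conjTranspose_conjTranspose, ← Matrix.mul_assoc,
      Matrix.trace_mul_comm]
    simp only [Matrix.mul_assoc]
  have e3 : (R * B * (R * B)ᴴ).trace = (R ^ 2 * (B * Bᴴ)).trace := by
    rw [Matrix.conjTranspose_mul, hR.eq, ← Matrix.mul_assoc, Matrix.trace_mul_comm, pow_two]
    simp only [Matrix.mul_assoc]
  rw [e1, e2, e3]
  simp only [stepOp, Matrix.add_mul, Matrix.sub_mul, Matrix.smul_mul, Matrix.trace_add,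
    Matrix.trace_sub, Matrix.trace_smul, smul_eq_mul, integral_const, probReal_univ, one_smul]
  ring

theorem avgOpSeq_eq_iterate (R : Mat) (m : ℕ) : avgOpSeq R m = (stepOp R)^[m] R := by
  induction m with
  | zero => rfl
  | succ m ih => rw [Function.iterate_succ_apply', ← ih]; rfl

theorem witnessOpSeq_congr (R B : Mat) (f g : ℕ → Mat) (m : ℕ) (h : ∀ k < m, f k = g k) :
    witnessOpSeq R B f m = witnessOpSeq R B g m := by
  induction m with
  | zero => rfl
  | succ m ih =>
    simp only [witnessOpSeq]
    rw [ih fun k hk => h k (by omega), h m (by omega)]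

/-- Extension of a finite family of unitaries to a sequence. -/
noncomputable def extU {m : ℕ} (V : Fin m → Matrix.unitaryGroup (Fin d) ℂ) (k : ℕ) :
    Matrix (Fin d) (Fin d) ℂ :=
  if h : k < m then (V ⟨k, h⟩ : Matrix (Fin d) (Fin d) ℂ) else 1

theorem continuous_extU {m : ℕ} (k : ℕ) :
    Continuous fun V : Fin m → UG => extU V k := by
  unfold extU
  split_ifs with h
  · exact cont_coe.comp (continuous_apply _)
  · exact continuous_const

theorem continuous_witness (R B : Mat) {m : ℕ} (k : ℕ) :
    Continuous fun V : Fin m → UG => witnessOpSeq R B (extU V) k := by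
  induction k with
  | zero => exact continuous_const
  | succ k ih =>
    simp only [witnessOpSeq]
    have h := ih.matrix_mul (continuous_extU (d := d) (m := m) k)
    exact h.sub ((continuous_const.matrix_mul h).matrix_trace.smul continuous_const)

theorem iterated (R B : Mat) (hR : R.IsHermitian) (m : ℕ) : ∀ A : Mat,
    ∫ V : Fin m → UG, (A * (witnessOpSeq R B (extU V) m * (witnessOpSeq R B (extU V) m)ᴴ)).trace
      ∂(Measure.pi fun _ => μ) = ((stepOp R)^[m] A * (B * Bᴴ)).trace := by
  have := compactSpace_unitary (d := d)
  have := secondCountable_unitary (d := d)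
  induction m with
  | zero =>
    intro A
    simp [witnessOpSeq]
  | succ m ih =>
    intro A
    have hcont : Continuous fun V : Fin (m + 1) → UG =>
        (A * (witnessOpSeq R B (extU V) (m + 1) *
          (witnessOpSeq R B (extU V) (m + 1))ᴴ)).trace := by
      have h := continuous_witness (d := d) R B (m := m + 1) (m + 1)
      exact (continuous_const.matrix_mul (h.matrix_mul h.matrix_conjTranspose)).matrix_trace
    have hint := integrable_of_cont (Measure.pi fun _ : Fin (m + 1) => μ) hcont
    have mp := (measurePreserving_piFinSuccAbove (fun _ : Fin (m + 1) => μ) (Fin.last m)).symm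
    have hint' := (mp.integrable_comp_emb (MeasurableEquiv.measurableEmbedding _)).mpr hint
    rw [← mp.integral_comp (MeasurableEquiv.measurableEmbedding _)]
    refine (integral_prod_symm _ hint').trans ?_
    rw [Function.iterate_succ_apply, ← ih (stepOp R A)]
    congr 1
    ext V
    rw [← one_step μ R A _ hR]
    congr 1
    ext U
    have hV : ∀ k < m, extU ((MeasurableEquiv.piFinSuccAbove
        (fun _ : Fin (m + 1) => UG) (Fin.last m)).symm (U, V)) k = extU V k := by
      intro k hk
      have h1 : (⟨k, by omega⟩ : Fin (m + 1)) = (Fin.last m).succAbove ⟨k, hk⟩ := by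
        ext; simp
      simp only [extU, hk, dif_pos (show k < m + 1 by omega), dif_pos]
      rw [h1]
      exact congrArg Subtype.val (Fin.insertNth_apply_succAbove (α := fun _ => UG)
        (Fin.last m) U V ⟨k, hk⟩)
    have hU : extU ((MeasurableEquiv.piFinSuccAbove
        (fun _ : Fin (m + 1) => UG) (Fin.last m)).symm (U, V)) m = (U : Mat) := by
      have h1 : (⟨m, by omega⟩ : Fin (m + 1)) = Fin.last m := rfl
      simp only [extU, dif_pos (show m < m + 1 by omega)]
      rw [h1]
      simp [MeasurableEquiv.piFinSuccAbove]
    simp only [Function.comp_apply, witnessOpSeq]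
    rw [witnessOpSeq_congr R B _ _ m hV, hU]

end Schur

end Helpers

/-- **Recursion formula for the averaged iteration.**
Let `μ` be the Haar probability measure on `U(d)`, `R` Hermitian with `trace R = 1`, and
`B₁` arbitrary.  For every `n ≥ 1`, the iterated Haar average of
`w n = trace(R * B n * B nᴴ)` over the unitaries `U₁, …, U_{n-1}` equals
`trace(A n * B₁ * B₁ᴴ)`, where `A₁ = R` and
`A_{k+1} = A_k + (1/d) • (trace(A_k) • R² - (R * A_k + A_k * R))`. -/
theorem averaged_iteration_recursion_formula
    {d : ℕ}
    [MeasurableSpace (Matrix.unitaryGroup (Fin d) ℂ)]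
    [BorelSpace (Matrix.unitaryGroup (Fin d) ℂ)]
    (μ : Measure (Matrix.unitaryGroup (Fin d) ℂ))
    [μ.IsHaarMeasure] [IsProbabilityMeasure μ]
    (R B₁ : Matrix (Fin d) (Fin d) ℂ)
    (hR : R.IsHermitian) (htrR : R.trace = 1) :
    ∀ n : ℕ, 1 ≤ n →
      ∫ V : Fin (n - 1) → Matrix.unitaryGroup (Fin d) ℂ,
          (R * (witnessOpSeq R B₁
                  (fun k => if h : k < n - 1 then (V ⟨k, h⟩ : Matrix (Fin d) (Fin d) ℂ)
                    else 1) (n - 1)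
                * (witnessOpSeq R B₁
                  (fun k => if h : k < n - 1 then (V ⟨k, h⟩ : Matrix (Fin d) (Fin d) ℂ)
                    else 1) (n - 1))ᴴ)).trace
        ∂(Measure.pi fun _ => μ)
      = (avgOpSeq R (n - 1) * (B₁ * B₁ᴴ)).trace := by
  intro n _
  rw [avgOpSeq_eq_iterate]
  exact iterated μ R B₁ hR (n - 1) R
end

section
/- Trace bound for the averaged iteration operators: let R be a Hermitian d×d complex matrix with trace(R) = 1, and define A₁ = R and A_{n+1} = A_n + (1/d)·[trace(A_n)·R² − (R·A_n + A_n·R)] for n ≥ 1. Then trace(A_n) ≤ 1 for every n ≥ 1. -/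
open Matrix ComplexOrder

/-- One step of the recursion, at the level of eigenvalues. -/
lemma eigen_step {d : ℕ} (hd : 1 ≤ (d : ℝ)) (r a g : Fin d → ℝ) (hg : ∀ i, 0 ≤ g i)
    (ha : ∑ i, a i ≤ 1)
    (h : ∀ i, (∑ j, a j) * r i ^ 2 - 2 * r i * a i = - (r i ^ 2 * g i)) :
    ∃ g' : Fin d → ℝ, (∀ i, 0 ≤ g' i) ∧
      (∑ i, (a i + (d : ℝ)⁻¹ * ((∑ j, a j) * r i ^ 2 - 2 * r i * a i)) ≤ 1) ∧
      ∀ i, (∑ j, (a j + (d : ℝ)⁻¹ * ((∑ k, a k) * r j ^ 2 - 2 * r j * a j))) * r i ^ 2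
        - 2 * r i * (a i + (d : ℝ)⁻¹ * ((∑ k, a k) * r i ^ 2 - 2 * r i * a i))
        = - (r i ^ 2 * g' i) := by
  simp only [h]
  have hs : ∑ j, (a j + (d : ℝ)⁻¹ * -(r j ^ 2 * g j))
      = ∑ j, a j - (d : ℝ)⁻¹ * ∑ j, r j ^ 2 * g j := by
    rw [Finset.sum_add_distrib, ← Finset.mul_sum, Finset.sum_neg_distrib]; ring
  rw [hs]
  have hd0 : 0 < (d : ℝ)⁻¹ := by positivity
  have hd1 : (d : ℝ)⁻¹ ≤ 1 := inv_le_one_of_one_le₀ hd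
  have hS : 0 ≤ ∑ j, r j ^ 2 * g j :=
    Finset.sum_nonneg fun j _ => mul_nonneg (sq_nonneg _) (hg j)
  refine ⟨fun i => g i + (d : ℝ)⁻¹ * (∑ j, r j ^ 2 * g j) - 2 * (d : ℝ)⁻¹ * r i * g i,
    fun i => ?_, ?_, fun i => ?_⟩
  · have h1 : r i ^ 2 * g i ≤ ∑ j, r j ^ 2 * g j :=
      Finset.single_le_sum (f := fun j => r j ^ 2 * g j)
        (fun j _ => mul_nonneg (sq_nonneg _) (hg j)) (Finset.mem_univ i)
    have h2 := mul_le_mul_of_nonneg_left h1 hd0.le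
    have h3 : 0 ≤ g i * (1 - (d : ℝ)⁻¹ * r i) ^ 2 := mul_nonneg (hg i) (sq_nonneg _)
    have h4 : 0 ≤ ((d : ℝ)⁻¹ * (1 - (d : ℝ)⁻¹)) * (r i ^ 2 * g i) :=
      mul_nonneg (mul_nonneg hd0.le (by linarith)) (mul_nonneg (sq_nonneg _) (hg i))
    simp only
    nlinarith
  · have := mul_nonneg hd0.le hS
    linarith
  · have := h i
    simp only
    linear_combination this

/-- **Trace bound for the averaged-iteration operators.**
Let `R` be a Hermitian `d × d` complex matrix with `trace R = 1`, and let `A 1 = R`,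
`A (n+1) = A n + (1/d) • (trace(A n) • R² - (R * A n + A n * R))` for `n ≥ 1`.
Then `trace(A n) ≤ 1` for every `n ≥ 1`. -/
theorem averaged_iteration_trace_le_one
    {d : ℕ}
    (R : Matrix (Fin d) (Fin d) ℂ) (hR : R.IsHermitian) (htr : R.trace = 1)
    (A : ℕ → Matrix (Fin d) (Fin d) ℂ)
    (hA1 : A 1 = R)
    (hArec : ∀ n, 1 ≤ n →
      A (n + 1) = A n + ((d : ℂ))⁻¹ • ((A n).trace • R ^ 2 - (R * A n + A n * R))) :
    ∀ n, 1 ≤ n → (A n).trace ≤ 1 := by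
  have hd : 1 ≤ (d : ℝ) := by
    rcases Nat.eq_zero_or_pos d with h | h
    · subst h
      simp [Matrix.trace] at htr
    · exact_mod_cast h
  obtain ⟨U, V, r, hVU, hRU⟩ : ∃ (U V : Matrix (Fin d) (Fin d) ℂ) (r : Fin d → ℝ),
      V * U = 1 ∧ R = U * diagonal (fun i => (r i : ℂ)) * V := by
    refine ⟨hR.eigenvectorUnitary, star (hR.eigenvectorUnitary : Matrix (Fin d) (Fin d) ℂ),
      hR.eigenvalues, ?_, ?_⟩
    · simp
    · conv_lhs => rw [hR.spectral_theorem]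
      simp [Unitary.conjStarAlgAut_apply, Function.comp_def]
  have htrace : ∀ a : Fin d → ℝ,
      (U * diagonal (fun i => (a i : ℂ)) * V).trace = ((∑ i, a i : ℝ) : ℂ) := by
    intro a
    rw [Matrix.trace_mul_comm, ← Matrix.mul_assoc, hVU, Matrix.one_mul, Matrix.trace_diagonal]
    push_cast
    rfl
  have hmul : ∀ a b : Fin d → ℝ,
      (U * diagonal (fun i => (a i : ℂ)) * V) * (U * diagonal (fun i => (b i : ℂ)) * V)
        = U * diagonal (fun i => ((a i * b i : ℝ) : ℂ)) * V := by
    intro a b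
    calc _ = U * diagonal (fun i => (a i : ℂ)) * (V * U) * diagonal (fun i => (b i : ℂ)) * V := by
          simp only [Matrix.mul_assoc]
      _ = _ := by
          rw [hVU, Matrix.mul_one, Matrix.mul_assoc U, Matrix.diagonal_mul_diagonal]
          push_cast
          rfl
  have key : ∀ n, 1 ≤ n → ∃ a g : Fin d → ℝ, A n = U * diagonal (fun i => (a i : ℂ)) * V ∧
      (∀ i, 0 ≤ g i) ∧ (∑ i, a i ≤ 1) ∧
      ∀ i, (∑ j, a j) * r i ^ 2 - 2 * r i * a i = - (r i ^ 2 * g i) := by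
    intro n hn
    induction n, hn using Nat.le_induction with
    | base =>
      have h1 : ∑ i, r i = 1 := by
        have := htrace r
        rw [← hRU, htr] at this
        exact_mod_cast this.symm
      refine ⟨r, fun _ => 1, by rw [hA1, hRU], fun _ => zero_le_one, h1.le, fun i => ?_⟩
      rw [h1]; ring
    | succ n hn ih =>
      obtain ⟨a, g, hA, hg, ha, h⟩ := ih
      obtain ⟨g', hg', ha', h'⟩ := eigen_step hd r a g hg ha h
      refine ⟨_, g', ?_, hg', ha', h'⟩
      rw [hArec n hn, hA, htrace, pow_two, hRU, hmul, hmul, hmul]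
      simp only [← Matrix.smul_mul, ← Matrix.add_mul, ← Matrix.mul_add,
        ← Matrix.sub_mul]
      congr 2
      ext i j
      simp
      ring
  intro n hn
  obtain ⟨a, g, hA, -, ha, -⟩ := key n hn
  rw [hA, htrace]
  exact_mod_cast ha
end

section
/- Eigenvalue recursion for the averaged iteration operators: let R be a Hermitian d×d complex matrix with trace(R) = 1 and define A₁ = R, A_{n+1} = A_n + (1/d)·[trace(A_n)·R² − (R·A_n + A_n·R)]. If ψ is an eigenvector of R with eigenvalue λ, then ψ is an eigenvector of A_n for every n ≥ 1, and the corresponding eigenvalues a_n satisfy a₁ = λ and a_{n+1} = a_n·(1 − 2λ/d) + trace(A_n)·λ²/d. -/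
open Matrix

/-- **Eigenvalue recursion for the averaged-iteration operators.**
Let `R` be Hermitian with `trace R = 1` and `A 1 = R`,
`A (n+1) = A n + (1/d) • (trace(A n) • R² - (R * A n + A n * R))`.  If `ψ` is an
eigenvector of `R` with (real) eigenvalue `l`, then `ψ` is an eigenvector of every
`A n`, and the corresponding (real) eigenvalues `a n` satisfy `a 1 = l` and
`a (n+1) = a n * (1 - 2*l/d) + trace(A n) * l²/d`. -/
theorem averaged_iteration_eigenvalue_recursion
    {d : ℕ} (hd : 0 < d)
    (R : Matrix (Fin d) (Fin d) ℂ) (hR : R.IsHermitian) (htr : R.trace = 1)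
    (A : ℕ → Matrix (Fin d) (Fin d) ℂ)
    (hA1 : A 1 = R)
    (hArec : ∀ n, 1 ≤ n →
      A (n + 1) = A n + ((d : ℂ))⁻¹ • ((A n).trace • R ^ 2 - (R * A n + A n * R)))
    (ψ : Fin d → ℂ) (hψ : ψ ≠ 0) (l : ℝ)
    (heig : R *ᵥ ψ = (l : ℂ) • ψ) :
    ∃ a : ℕ → ℝ, a 1 = l ∧
      ∀ n, 1 ≤ n →
        A n *ᵥ ψ = ((a n : ℝ) : ℂ) • ψ ∧
        a (n + 1) = a n * (1 - 2 * l / d) + ((A n).trace).re * l ^ 2 / d := by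
  have hreal : ∀ M : Matrix (Fin d) (Fin d) ℂ, M.IsHermitian →
      ((M.trace.re : ℝ) : ℂ) = M.trace := by
    intro M hM
    apply Complex.conj_eq_iff_re.mp
    have h := Matrix.trace_conjTranspose M
    rw [hM.eq] at h
    exact h.symm
  have hH : ∀ n, 1 ≤ n → (A n).IsHermitian := by
    intro n hn
    induction n, hn using Nat.le_induction with
    | base => rw [hA1]; exact hR
    | succ n hn ih =>
      have ht : star (A n).trace = (A n).trace := by
        rw [← Matrix.trace_conjTranspose, ih.eq]
      rw [hArec n hn]
      unfold Matrix.IsHermitian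
      simp only [conjTranspose_add, conjTranspose_sub, conjTranspose_smul, conjTranspose_mul,
        conjTranspose_pow, ih.eq, hR.eq, ht, star_inv₀, star_natCast]
      rw [add_comm (A n * R)]
  let a : ℕ → ℝ := fun n => Nat.rec (motive := fun _ => ℝ) 0
    (fun n x => if n = 0 then l else
      x * (1 - 2 * l / d) + ((A n).trace).re * l ^ 2 / d) n
  have ha1 : a 1 = l := by simp [a]
  have ha : ∀ n, 1 ≤ n →
      a (n + 1) = a n * (1 - 2 * l / d) + ((A n).trace).re * l ^ 2 / d := by
    intro n hn
    have h0 : n ≠ 0 := by omega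
    simp [a, h0]
  refine ⟨a, ha1, fun n hn => ⟨?_, ha n hn⟩⟩
  induction n, hn using Nat.le_induction with
  | base => rw [hA1, ha1]; exact heig
  | succ n hn ih =>
    rw [hArec n hn, ha n hn]
    have ht := hreal _ (hH n hn)
    simp only [add_mulVec, sub_mulVec, smul_mulVec, pow_two, ← mulVec_mulVec, ih, heig,
      mulVec_smul]
    push_cast
    rw [ht]
    ext i
    simp only [Pi.add_apply, Pi.sub_apply, Pi.smul_apply, smul_eq_mul]
    ring
end

section
/- Exponential decrease on the negative subspace: let d > 0 and λ > 0 be real numbers, let (t_n) be a real sequence with t_n ≤ 1 for all n, and let (b_n) be the real sequence defined by b₁ = −λ and b_{n+1} = b_n·(1 + 2λ/d) + t_n·λ²/d. Then b_n ≤ −λ·(1 + λ/d)^{n−1} for every n ≥ 1. -/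
/-- **Exponential decrease on the negative subspace.**
Let `d > 0` and `l > 0` be real numbers, let `(t n)` be a real sequence with `t n ≤ 1`
for all `n`, and let `(b n)` satisfy `b 1 = -l` and
`b (n+1) = b n * (1 + 2*l/d) + t n * l²/d`.  Then `b n ≤ -l * (1 + l/d)^(n-1)` for all
`n ≥ 1`. -/
theorem negative_subspace_exponential_decrease
    (d l : ℝ) (hd : 0 < d) (hl : 0 < l)
    (t : ℕ → ℝ) (ht : ∀ n, t n ≤ 1)
    (b : ℕ → ℝ) (hb1 : b 1 = -l)
    (hbrec : ∀ n, 1 ≤ n → b (n + 1) = b n * (1 + 2 * l / d) + t n * l ^ 2 / d) :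
    ∀ n, 1 ≤ n → b n ≤ -l * (1 + l / d) ^ (n - 1) := by
  intro n hn
  induction n, hn using Nat.le_induction with
  | base => simp [hb1]
  | succ n hn ih =>
    obtain ⟨k, rfl⟩ : ∃ k, n = k + 1 := ⟨n - 1, by omega⟩
    rw [hbrec _ hn]
    simp only [Nat.add_sub_cancel] at ih ⊢
    have hx : 0 < l / d := div_pos hl hd
    have e1 : 2 * l / d = 2 * (l / d) := by ring
    have e2 : t (k + 1) * l ^ 2 / d = t (k + 1) * (l * (l / d)) := by ring
    rw [e1, e2, pow_succ]
    generalize l / d = x at *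
    have hP : 1 ≤ (1 + x) ^ k := one_le_pow₀ (by linarith)
    have hlx : 0 < l * x := mul_pos hl hx
    have h1 := mul_le_mul_of_nonneg_right ih (show 0 ≤ 1 + 2 * x by linarith)
    have h2 := mul_le_mul_of_nonneg_right (ht (k + 1)) hlx.le
    have h3 := mul_le_mul_of_nonneg_right hP hlx.le
    generalize (1 + x) ^ k = P at *
    linarith
end
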